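/- Let C = A ∪ B be an ℓ-critical set with |A| ≥ 5. Then at most two points of A lie on the boundary of the convex hull of C. -/

import Mathlib

noncomputable section

/-- Points of the plane. -/
abbrev Pt : Type := ℝ × ℝ

/-- The cross product (signed area) of two planar vectors. -/
def cross2 (u v : Pt) : ℝ := u.1 * v.2 - u.2 * v.1

/-- The dot product of two planar vectors. -/
def dotp (v p : Pt) : ℝ := v.1 * p.1 + v.2 * p.2

/-- A set of points in the plane is in general position if no three of its points
are collinear. -/
def GenPos (P : Set Pt) : Prop :=
  ∀ p ∈ P, ∀ q ∈ P, ∀ r ∈ P, p ≠ q → p ≠ r → q ≠ r →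
    ¬ Collinear ℝ ({p, q, r} : Set Pt)

/-- A set of points is in convex position if no point of the set lies in the convex
hull of the other points. -/
def ConvexPos (S : Set Pt) : Prop :=
  ∀ p ∈ S, p ∉ convexHull ℝ (S \ {p})

/-- `H` is a `k`-hole in `P`: a subset of `P` of size `k` in convex position whose
convex hull contains no point of `P \ H`. -/
def IsKHole (k : ℕ) (P H : Finset Pt) : Prop :=
  H ⊆ P ∧ H.card = k ∧ ConvexPos (↑H : Set Pt) ∧
    ∀ p ∈ P, p ∉ H → p ∉ convexHull ℝ (↑H : Set Pt)

/-- The number of `k`-holes in `P`. -/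
def numKHoles (k : ℕ) (P : Finset Pt) : ℕ :=
  Set.ncard {H : Finset Pt | IsKHole k P H}

/-- For an `ℓ`-divided set `P = A ∪ B`, an `ℓ`-divided 5-hole is a 5-hole in `A ∪ B`
containing points of both `A` and `B`. -/
def DividedFiveHole (A B H : Finset Pt) : Prop :=
  IsKHole 5 (A ∪ B) H ∧ (↑H ∩ ↑A : Set Pt).Nonempty ∧ (↑H ∩ ↑B : Set Pt).Nonempty

/-- `x` is an extremal point of `P`: it lies on the boundary of the convex hull of `P`. -/
def OnHullBoundary (P : Finset Pt) (x : Pt) : Prop :=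
  x ∈ frontier (convexHull ℝ (↑P : Set Pt))

/-- An `ℓ`-divided set `C = A ∪ B` is `ℓ`-critical if neither part is in convex position
and, for every extremal point `x` of `C`, one of the sets `(C \ {x}) ∩ A` and
`(C \ {x}) ∩ B` is in convex position. -/
def LCritical (A B : Finset Pt) : Prop :=
  ¬ ConvexPos (↑A : Set Pt) ∧ ¬ ConvexPos (↑B : Set Pt) ∧
    ∀ x ∈ A ∪ B, OnHullBoundary (A ∪ B) x →
      (ConvexPos (↑(A.erase x) : Set Pt) ∨ ConvexPos (↑(B.erase x) : Set Pt))

/-- The closed wedge with apex `a` swept clockwise from the ray `a→p` to the ray `a→q`.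
If the clockwise angle from `a→p` to `a→q` is at most `π` the wedge is convex, otherwise
it is the corresponding reflex region. -/
def Wedge (a p q : Pt) : Set Pt :=
  if cross2 (p - a) (q - a) ≤ 0 then
    {x | cross2 (p - a) (x - a) ≤ 0 ∧ 0 ≤ cross2 (q - a) (x - a)}
  else
    {x | cross2 (p - a) (x - a) ≤ 0 ∨ 0 ≤ cross2 (q - a) (x - a)}

/-- `W` is an `a`-wedge of `A`: one of the closed regions into which the rays from `a`
through the other points of `A` partition the plane, i.e. a wedge spanned by two
points of `A \ {a}` that are angularly consecutive around `a` (no other point of `A`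
lies in the wedge). -/
def IsAWedge (A : Finset Pt) (a : Pt) (W : Set Pt) : Prop :=
  ∃ p ∈ A.erase a, ∃ q ∈ A.erase a, p ≠ q ∧ W = Wedge a p q ∧
    (↑A : Set Pt) ∩ Wedge a p q ⊆ {a, p, q}

/-- The combinatorial data of the `a*`-wedges of an `ℓ`-divided set `P = A ∪ B`, where
`ℓ` is the vertical line `x = x0` and `A` lies to its left: `aStar` is the rightmost
interior point `a*` of `A`; `lbl` is the clockwise cyclic labeling `a_0, a_1, …` of
`A \ {a*}` (period `|A| - 1`), so that the `k`-th wedge `W_k` is swept clockwise from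
the ray through `lbl (k-1)` to the ray through `lbl k` and contains no other point
of `A`; the wedges `W_1, …, W_t` are exactly those meeting `ℓ`, in top-to-bottom
order along `ℓ`. -/
structure StarSetup (x0 : ℝ) (A : Finset Pt) where
  aStar : Pt
  lbl : ℕ → Pt
  t : ℕ
  aStar_mem : aStar ∈ A
  aStar_interior : aStar ∈ interior (convexHull ℝ (↑A : Set Pt))
  aStar_rightmost : ∀ p ∈ A, p ∈ interior (convexHull ℝ (↑A : Set Pt)) → p.1 ≤ aStar.1
  lbl_mem : ∀ k, lbl k ∈ A.erase aStar
  lbl_periodic : ∀ k, lbl (k + (A.card - 1)) = lbl k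
  lbl_bij : ∀ p ∈ A.erase aStar, ∃! k, k ∈ Finset.Icc 1 (A.card - 1) ∧ lbl k = p
  consec : ∀ k ∈ Finset.Icc 1 (A.card - 1),
    (↑A : Set Pt) ∩ Wedge aStar (lbl (k - 1)) (lbl k) ⊆ {aStar, lbl (k - 1), lbl k}
  t_pos : 1 ≤ t
  t_le : t ≤ A.card - 1
  inter_iff : ∀ k ∈ Finset.Icc 1 (A.card - 1),
    ((Wedge aStar (lbl (k - 1)) (lbl k)) ∩ {p : Pt | p.1 = x0}).Nonempty ↔ k ≤ t
  ordered : ∀ k ∈ Finset.Icc 1 t, ∀ k' ∈ Finset.Icc 1 t, k < k' →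
    ∀ p ∈ (Wedge aStar (lbl (k - 1)) (lbl k)) ∩ {q : Pt | q.1 = x0},
    ∀ p' ∈ (Wedge aStar (lbl (k' - 1)) (lbl k')) ∩ {q : Pt | q.1 = x0},
      p'.2 ≤ p.2

/-- The `k`-th `a*`-wedge `W_k`. -/
def StarSetup.W {x0 : ℝ} {A : Finset Pt} (S : StarSetup x0 A) (k : ℕ) : Set Pt :=
  Wedge S.aStar (S.lbl (k - 1)) (S.lbl k)

/-- `w_k`, the number of points of `B` in the `k`-th `a*`-wedge. -/
def StarSetup.w {x0 : ℝ} {A : Finset Pt} (S : StarSetup x0 A) (B : Finset Pt) (k : ℕ) : ℕ :=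
  Set.ncard ((↑B : Set Pt) ∩ S.W k)

/-!
Work in dimension `d`. Some `a ∈ A` lies in the convex hull of `A \ {a}`, and by general position it
is interior to the hull of `A`. So a point `u ∈ A` on the boundary of the hull of `A ∪ B` differs
from `a`, and since `A \ {u}` is in convex position, `u` is a vertex of every simplex with vertices
in `A \ {a}` that contains `a`. By Carathéodory's theorem there is such a simplex, even with one
vertex prescribed. There are thus at most `d + 1` such points `u`, so if `|A| ≥ d + 3` some
`p ∈ A \ {a}` is not one of them; a simplex with vertex `p` leaves room for only `d` of them.
-/

section Caratheodory

variable {𝕜 E : Type*} [Field 𝕜] [LinearOrder 𝕜] [IsStrictOrderedRing 𝕜] [AddCommGroup E]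
  [Module 𝕜 E]

theorem exists_sum_smul_eq_zero_nonpos_of_not_affineIndependent {t : Finset E}
    (ht : ¬AffineIndependent 𝕜 ((↑) : t → E)) (p : E) :
    ∃ g : E → 𝕜, ∑ e ∈ t, g e • e = 0 ∧ ∑ e ∈ t, g e = 0 ∧ (∃ e ∈ t, 0 < g e) ∧ g p ≤ 0 := by
  obtain ⟨g, hgsmul, hgsum, hgne⟩ := exists_nontrivial_relation_sum_zero_of_not_affine_ind ht
  rcases le_total (g p) 0 with hgp | hgp
  · exact ⟨g, hgsmul, hgsum, Finset.exists_pos_of_sum_zero_of_exists_nonzero g hgsum hgne, hgp⟩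
  · have hsum : ∑ e ∈ t, (-g) e = 0 := by simp [hgsum]
    exact ⟨-g, by simp [hgsmul], hsum,
      Finset.exists_pos_of_sum_zero_of_exists_nonzero (-g) hsum (by simpa using hgne),
      by simpa using hgp⟩

theorem exists_mem_convexHull_erase_of_sum_smul_eq_zero [DecidableEq E] {t : Finset E} {x : E}
    (hx : x ∈ convexHull 𝕜 (t : Set E)) {g : E → 𝕜} (hgsmul : ∑ e ∈ t, g e • e = 0)
    (hgsum : ∑ e ∈ t, g e = 0) (hgpos : ∃ e ∈ t, 0 < g e) :
    ∃ y ∈ t, 0 < g y ∧ x ∈ convexHull 𝕜 (t.erase y : Set E) := by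
  obtain ⟨w, hw_nonneg, hw_sum, hw_smul⟩ := Finset.mem_convexHull'.1 hx
  obtain ⟨y, hy, hmin⟩ := Finset.exists_min_image {e ∈ t | 0 < g e} (fun e ↦ w e / g e)
    (hgpos.imp fun e he ↦ Finset.mem_filter.2 he)
  obtain ⟨hyt, hgy⟩ := Finset.mem_filter.1 hy
  -- Subtracting the largest multiple of `g` that keeps the weights nonnegative kills that of `y`.
  set r := w y / g y
  have hr : 0 ≤ r := div_nonneg (hw_nonneg y hyt) hgy.le
  have hy_zero : w y - r * g y = 0 := by rw [div_mul_cancel₀ _ hgy.ne', sub_self]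
  refine ⟨y, hyt, hgy, Finset.mem_convexHull'.2 ⟨fun e ↦ w e - r * g e, fun e he ↦ ?_, ?_, ?_⟩⟩
  · have het := Finset.mem_of_mem_erase he
    rw [sub_nonneg]
    rcases le_or_gt (g e) 0 with hge | hge
    · exact (mul_nonpos_of_nonneg_of_nonpos hr hge).trans (hw_nonneg e het)
    · exact (le_div_iff₀ hge).1 (hmin e (Finset.mem_filter.2 ⟨het, hge⟩))
  · calc
      ∑ e ∈ t.erase y, (w e - r * g e) = ∑ e ∈ t, (w e - r * g e) := Finset.sum_erase t hy_zero
      _ = 1 := by rw [Finset.sum_sub_distrib, ← Finset.mul_sum, hgsum, hw_sum, mul_zero, sub_zero]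
  · calc
      ∑ e ∈ t.erase y, (w e - r * g e) • e = ∑ e ∈ t, (w e - r * g e) • e :=
        Finset.sum_erase t (by rw [hy_zero, zero_smul])
      _ = x := by
        simp only [sub_smul, mul_smul, Finset.sum_sub_distrib, ← Finset.smul_sum, hgsmul, hw_smul,
          smul_zero, sub_zero]

theorem exists_ne_mem_convexHull_erase [DecidableEq E] {t : Finset E}
    (ht : ¬AffineIndependent 𝕜 ((↑) : t → E)) {x : E} (hx : x ∈ convexHull 𝕜 (t : Set E)) (p : E) :
    ∃ y ∈ t, y ≠ p ∧ x ∈ convexHull 𝕜 (t.erase y : Set E) := by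
  obtain ⟨g, hgsmul, hgsum, hgpos, hgp⟩ :=
    exists_sum_smul_eq_zero_nonpos_of_not_affineIndependent ht p
  obtain ⟨y, hyt, hgy, hxy⟩ := exists_mem_convexHull_erase_of_sum_smul_eq_zero hx hgsmul hgsum hgpos
  exact ⟨y, hyt, fun hyp ↦ (hyp ▸ hgy).not_ge hgp, hxy⟩

theorem exists_mem_affineIndependent_mem_convexHull {S : Set E} {p x : E} (hp : p ∈ S)
    (hx : x ∈ convexHull 𝕜 S) :
    ∃ t : Finset E, ↑t ⊆ S ∧ p ∈ t ∧ AffineIndependent 𝕜 ((↑) : t → E) ∧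
      x ∈ convexHull 𝕜 (t : Set E) := by
  classical
  obtain ⟨t₀, ht₀S, hxt₀⟩ : ∃ t : Finset E, ↑t ⊆ S ∧ x ∈ convexHull 𝕜 (t : Set E) := by
    simpa only [convexHull_eq_union_convexHull_finite_subsets S, Set.mem_iUnion, exists_prop]
      using hx
  obtain ⟨t, ⟨htS, hpt, hxt⟩, hmin⟩ := exists_minimal_of_wellFoundedLT
    (fun t : Finset E ↦ ↑t ⊆ S ∧ p ∈ t ∧ x ∈ convexHull 𝕜 (t : Set E))
    ⟨insert p t₀, by simpa using Set.insert_subset hp ht₀S, Finset.mem_insert_self p t₀,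
      convexHull_mono (by simp) hxt₀⟩
  refine ⟨t, htS, hpt, ?_, hxt⟩
  by_contra ht
  obtain ⟨y, hyt, hyp, hxy⟩ := exists_ne_mem_convexHull_erase ht hxt p
  have hle := hmin ⟨(Finset.coe_subset.2 (t.erase_subset y)).trans htS,
    Finset.mem_erase.2 ⟨hyp.symm, hpt⟩, hxy⟩ (t.erase_subset y)
  exact Finset.notMem_erase y t (hle hyt)

variable [FiniteDimensional 𝕜 E]

theorem encard_setOf_notMem_convexHull_sdiff_singleton_le {S : Set E} {x : E}
    (hx : x ∈ convexHull 𝕜 S) (hS : Module.finrank 𝕜 E + 2 ≤ S.encard) :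
    {u | x ∉ convexHull 𝕜 (S \ {u})}.encard ≤ Module.finrank 𝕜 E := by
  set U := {u | x ∉ convexHull 𝕜 (S \ {u})}
  have exists_simplex (p : E) (hp : p ∈ S) :
      ∃ t : Finset E, p ∈ t ∧ t.card ≤ Module.finrank 𝕜 E + 1 ∧ U ⊆ t := by
    obtain ⟨t, htS, hpt, ht, hxt⟩ := exists_mem_affineIndependent_mem_convexHull hp hx
    refine ⟨t, hpt, ?_, fun u hu ↦ ?_⟩
    · simpa using ht.card_le_finrank_succ.trans
        (Nat.succ_le_succ (Submodule.finrank_le (vectorSpan 𝕜 _)))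
    · by_contra hut
      exact hu (convexHull_mono (Set.subset_sdiff_singleton htS hut) hxt)
  obtain ⟨p, hpS, hpU⟩ : ∃ p ∈ S, p ∉ U := by
    obtain ⟨q, hq⟩ := convexHull_nonempty_iff.1 ⟨x, hx⟩
    obtain ⟨t, -, htcard, hUt⟩ := exists_simplex q hq
    refine Set.not_subset.1 fun hSU ↦ ?_
    have hle : (Module.finrank 𝕜 E + 2 : ℕ∞) ≤ t.card := by
      rw [← Set.encard_coe_eq_coe_finsetCard]
      exact hS.trans (Set.encard_le_encard (hSU.trans hUt))
    have hle' : Module.finrank 𝕜 E + 2 ≤ t.card := mod_cast hle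
    omega
  obtain ⟨t, hpt, htcard, hUt⟩ := exists_simplex p hpS
  classical
  calc
    U.encard ≤ (t.erase p : Set E).encard :=
      Set.encard_le_encard (by simpa using Set.subset_sdiff_singleton hUt hpU)
    _ = ((t.erase p).card : ℕ∞) := Set.encard_coe_eq_coe_finsetCard _
    _ ≤ Module.finrank 𝕜 E := by
      rw [Finset.card_erase_of_mem hpt]
      exact_mod_cast Nat.sub_le_of_le_add htcard

theorem encard_setOf_convexIndependent_sdiff_singleton_le {A : Set E} {a : E} (haA : a ∈ A)
    (ha : a ∈ convexHull 𝕜 (A \ {a})) (hA : Module.finrank 𝕜 E + 3 ≤ A.encard) :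
    {u | u ≠ a ∧ ConvexIndependent 𝕜 ((↑) : ↥(A \ {u}) → E)}.encard ≤ Module.finrank 𝕜 E := by
  have hcard : Module.finrank 𝕜 E + 2 ≤ (A \ {a}).encard := by
    rw [← Set.encard_sdiff_singleton_add_one haA] at hA
    exact (ENat.add_le_add_iff_right ENat.one_ne_top).1 hA
  refine le_trans (Set.encard_le_encard ?_)
    (encard_setOf_notMem_convexHull_sdiff_singleton_le ha hcard)
  rintro u ⟨hua, hu⟩
  rw [Set.mem_ofPred_eq, Set.sdiff_sdiff_comm]
  exact convexIndependent_set_iff_notMem_convexHull_sdiff.1 hu a ⟨haA, hua.symm⟩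

end Caratheodory

section GeneralPosition

/-- A set in a vector space of dimension `d` is in general position if any `d + 1` of its points
are affinely independent. Subsets of fewer points are included so that the notion is also
meaningful for sets with at most `d` points. In infinite dimension `Module.finrank` is `0`, and the
condition holds for every set. -/
def InGeneralPosition (𝕜 : Type*) {E : Type*} [Field 𝕜] [AddCommGroup E] [Module 𝕜 E]
    (S : Set E) : Prop :=
  ∀ t : Finset E, ↑t ⊆ S → t.card ≤ Module.finrank 𝕜 E + 1 → AffineIndependent 𝕜 ((↑) : t → E)

section Field

variable {𝕜 E : Type*} [Field 𝕜] [AddCommGroup E] [Module 𝕜 E] {S : Set E}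

theorem InGeneralPosition.mono {S' : Set E} (hS : InGeneralPosition 𝕜 S) (hS' : S' ⊆ S) :
    InGeneralPosition 𝕜 S' :=
  fun t ht ↦ hS t (ht.trans hS')

theorem inGeneralPosition_of_not_collinear (hE : Module.finrank 𝕜 E ≤ 2)
    (hS : ∀ p ∈ S, ∀ q ∈ S, ∀ r ∈ S, p ≠ q → p ≠ r → q ≠ r → ¬Collinear 𝕜 {p, q, r}) :
    InGeneralPosition 𝕜 S := by
  classical
  intro t htS htcard
  replace htcard : t.card ≤ 3 := htcard.trans (Nat.succ_le_succ hE)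
  interval_cases hcard : t.card
  · obtain rfl := Finset.card_eq_zero.1 hcard
    exact affineIndependent_of_subsingleton 𝕜 _
  · obtain ⟨p, rfl⟩ := Finset.card_eq_one.1 hcard
    exact affineIndependent_of_subsingleton 𝕜 _
  · obtain ⟨p, q, hpq, rfl⟩ := Finset.card_eq_two.1 hcard
    exact (affineIndependent_of_ne 𝕜 hpq).range.mono (by simp [Set.pair_comm])
  · obtain ⟨p, q, r, hpq, hpr, hqr, rfl⟩ := Finset.card_eq_three.1 hcard
    have hpqr := hS p (htS (by simp)) q (htS (by simp)) r (htS (by simp)) hpq hpr hqr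
    refine (affineIndependent_iff_not_collinear_set.2 hpqr).range.mono ?_
    simp [Matrix.range_cons, Set.insert_subset_iff]

end Field

theorem convexIndependent_of_affineIndependent {𝕜 E ι : Type*} [Ring 𝕜] [PartialOrder 𝕜]
    [Nontrivial 𝕜] [AddCommGroup E] [Module 𝕜 E] {z : ι → E} (hz : AffineIndependent 𝕜 z) :
    ConvexIndependent 𝕜 z :=
  fun s i hi ↦ (hz.mem_affineSpan_iff i s).1 (convexHull_subset_affineSpan _ hi)

theorem InGeneralPosition.finrank_lt_card {𝕜 E : Type*} [Field 𝕜] [LinearOrder 𝕜]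
    [IsStrictOrderedRing 𝕜] [AddCommGroup E] [Module 𝕜 E] {S : Set E}
    (hS : InGeneralPosition 𝕜 S) {a : E} (haS : a ∈ S) {t : Finset E} (ht : ↑t ⊆ S \ {a})
    (hat : a ∈ convexHull 𝕜 (t : Set E)) : Module.finrank 𝕜 E < t.card := by
  classical
  by_contra! hcard
  have hindep : AffineIndependent 𝕜 ((↑) : ↥(insert a t) → E) :=
    hS _ (by simpa using Set.insert_subset haS (ht.trans Set.sdiff_subset))
      ((Finset.card_insert_le a t).trans (Nat.succ_le_succ hcard))
  have ha_notMem : a ∉ convexHull 𝕜 ((insert a t : Finset E) \ {a} : Set E) :=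
    convexIndependent_set_iff_notMem_convexHull_sdiff.1
      (convexIndependent_of_affineIndependent hindep) a (by simp)
  refine ha_notMem (convexHull_mono ?_ hat)
  exact Set.subset_sdiff_singleton (by simp) fun h ↦ (ht h).2 rfl

variable {E : Type*} [NormedAddCommGroup E] [NormedSpace ℝ E] [FiniteDimensional ℝ E]

theorem sum_smul_mem_interior_convexHull_of_affineIndependent {ι : Type*} [Fintype ι] {z : ι → E}
    (hz : AffineIndependent ℝ z) (hcard : Fintype.card ι = Module.finrank ℝ E + 1) {w : ι → ℝ}
    (hw_pos : ∀ i, 0 < w i) (hw_sum : ∑ i, w i = 1) :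
    ∑ i, w i • z i ∈ interior (convexHull ℝ (Set.range z)) := by
  let b : AffineBasis ι ℝ E := ⟨z, hz, hz.affineSpan_eq_top_iff_card_eq_finrank_add_one.2 hcard⟩
  have hcomb : ∑ i, w i • z i = Finset.univ.affineCombination ℝ b w :=
    (Finset.affineCombination_eq_linear_combination _ _ _ hw_sum).symm
  have hint : ∑ i, w i • z i ∈ interior (convexHull ℝ (Set.range b)) := by
    rw [b.interior_convexHull]
    intro i
    rw [hcomb, b.coord_apply_combination_of_mem (Finset.mem_univ i) hw_sum]
    exact hw_pos i
  exact hint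

theorem InGeneralPosition.mem_interior_convexHull {S : Set E} (hS : InGeneralPosition ℝ S) {a : E}
    (haS : a ∈ S) (ha : a ∈ convexHull ℝ (S \ {a})) : a ∈ interior (convexHull ℝ S) := by
  obtain ⟨ι, _, z, w, hzS, hz, hw_pos, hw_sum, rfl⟩ := eq_pos_convex_span_of_mem_convexHull ha
  have hz_subset : Set.range z ⊆ S := hzS.trans Set.sdiff_subset
  have hcard_le : Fintype.card ι ≤ Module.finrank ℝ E + 1 :=
    hz.card_le_finrank_succ.trans (Nat.succ_le_succ (Submodule.finrank_le _))
  have hcard_gt : Module.finrank ℝ E < Fintype.card ι := by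
    classical
    rw [← Finset.card_univ, ← Finset.card_image_of_injective Finset.univ hz.injective]
    refine hS.finrank_lt_card haS (by simpa using hzS) ?_
    rw [Finset.coe_image, Finset.coe_univ, Set.image_univ]
    exact mem_convexHull_of_exists_fintype w z (fun i ↦ (hw_pos i).le) hw_sum Set.mem_range_self rfl
  exact interior_mono (convexHull_mono hz_subset)
    (sum_smul_mem_interior_convexHull_of_affineIndependent hz (by omega) hw_pos hw_sum)

end GeneralPosition

section Critical

/-- The notion `LCritical` for two arbitrary sets in a real topological vector space: neither is
convexly independent, but removing any one of their points that lies on the boundary of the convex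
hull of their union makes one of them so. -/
structure IsCritical {E : Type*} [AddCommGroup E] [Module ℝ E] [TopologicalSpace E]
    (A B : Set E) : Prop where
  not_convexIndependent_left : ¬ConvexIndependent ℝ ((↑) : A → E)
  not_convexIndependent_right : ¬ConvexIndependent ℝ ((↑) : B → E)
  convexIndependent_sdiff_singleton : ∀ x ∈ A ∪ B, x ∈ frontier (convexHull ℝ (A ∪ B)) →
    ConvexIndependent ℝ ((↑) : ↥(A \ {x}) → E) ∨ ConvexIndependent ℝ ((↑) : ↥(B \ {x}) → E)

theorem IsCritical.convexIndependent_left_sdiff_singleton {E : Type*} [AddCommGroup E] [Module ℝ E]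
    [TopologicalSpace E] {A B : Set E} (h : IsCritical A B) {x : E} (hxA : x ∈ A) (hxB : x ∉ B)
    (hx : x ∈ frontier (convexHull ℝ (A ∪ B))) :
    ConvexIndependent ℝ ((↑) : ↥(A \ {x}) → E) := by
  have hor := h.convexIndependent_sdiff_singleton x (Or.inl hxA) hx
  rw [Set.sdiff_singleton_eq_self hxB] at hor
  exact hor.resolve_right h.not_convexIndependent_right

theorem critical_at_most_two_extremal_general {E : Type*} [NormedAddCommGroup E] [NormedSpace ℝ E]
    [FiniteDimensional ℝ E] {A B : Set E} (hAB : Disjoint A B) (hgen : InGeneralPosition ℝ A)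
    (hcrit : IsCritical A B) (hA : Module.finrank ℝ E + 3 ≤ A.encard) :
    {p | p ∈ A ∧ p ∈ frontier (convexHull ℝ (A ∪ B))}.encard ≤ Module.finrank ℝ E := by
  obtain ⟨a, haA, ha⟩ : ∃ a ∈ A, a ∈ convexHull ℝ (A \ {a}) := by
    simpa [convexIndependent_set_iff_notMem_convexHull_sdiff] using hcrit.not_convexIndependent_left
  have ha_interior : a ∈ interior (convexHull ℝ (A ∪ B)) :=
    interior_mono (convexHull_mono Set.subset_union_left) (hgen.mem_interior_convexHull haA ha)
  refine le_trans (Set.encard_le_encard ?_)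
    (encard_setOf_convexIndependent_sdiff_singleton_le haA ha hA)
  rintro p ⟨hpA, hp⟩
  exact ⟨fun hpa ↦ hp.2 (hpa ▸ ha_interior),
    hcrit.convexIndependent_left_sdiff_singleton hpA (Set.disjoint_left.1 hAB hpA) hp⟩

end Critical

section Plane

theorem convexPos_iff_convexIndependent {S : Set Pt} :
    ConvexPos S ↔ ConvexIndependent ℝ ((↑) : S → Pt) :=
  convexIndependent_set_iff_notMem_convexHull_sdiff.symm

theorem GenPos.inGeneralPosition {S : Set Pt} (hS : GenPos S) : InGeneralPosition ℝ S :=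
  inGeneralPosition_of_not_collinear (by simp) hS

theorem LCritical.isCritical {A B : Finset Pt} (h : LCritical A B) :
    IsCritical (A : Set Pt) (B : Set Pt) where
  not_convexIndependent_left := mt convexPos_iff_convexIndependent.2 h.1
  not_convexIndependent_right := mt convexPos_iff_convexIndependent.2 h.2.1
  convexIndependent_sdiff_singleton := by
    simpa [LCritical, OnHullBoundary, convexPos_iff_convexIndependent] using h.2.2

end Plane

/-- **Lemma 4(i).** Let `C = A ∪ B` be an `ℓ`-critical set with `|A| ≥ 5`. Then at most
two points of `A` lie on the boundary of the convex hull of `C`. -/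
theorem critical_at_most_two_extremal
    (v : Pt) (hv : v ≠ 0) (c : ℝ) (A B : Finset Pt)
    (hA : ∀ p ∈ A, dotp v p < c) (hB : ∀ p ∈ B, c < dotp v p)
    (hAne : A.Nonempty) (hBne : B.Nonempty)
    (hgen : GenPos (↑(A ∪ B) : Set Pt))
    (hcrit : LCritical A B)
    (hAcard : 5 ≤ A.card) :
    Set.ncard {p : Pt | p ∈ A ∧ OnHullBoundary (A ∪ B) p} ≤ 2 := by
  have hAB : Disjoint (A : Set Pt) B :=
    Set.disjoint_left.2 fun p hpA hpB ↦ lt_asymm (hA p hpA) (hB p hpB)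
  have hgenA := hgen.inGeneralPosition.mono (Finset.coe_subset.2 Finset.subset_union_left)
  have hle := critical_at_most_two_extremal_general hAB hgenA hcrit.isCritical
    (by simpa using mod_cast hAcard)
  rw [Module.finrank_prod, Module.finrank_self, ← Finset.coe_union] at hle
  exact mod_cast (Set.ncard_le_encard _).trans hle

end
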